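/- Let 0 < α < 1. There exists a constant c > 0, depending only on α, such that whenever f : ℂ → ℂ satisfies |f(z) − f(w)| ≤ C·|z − w|^α for all z, w ∈ ℂ, and N₁, N₂ are bounded normal operators on a complex Hilbert space, then ‖f(N₁) − f(N₂)‖ ≤ c·C·‖N₁ − N₂‖^α. In particular, every Hölder function of order α on the plane is operator Hölder of order α for normal operators. -/

import Mathlib

/-!
Let `A s f` be the average of `f` against the Gaussian density of width `s`. At scale `1` the
density is the square of a Gaussian `γ`, so `(A 1 a)(N) = ∫ a(k) γ(k - N)² dk`. Since `γ` is its own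
Fourier transform, `k ↦ γ(k - N)` is the Fourier transform of `ξ ↦ γ(ξ) exp (2πi⟨ξ, N⟩)`, and the
plane wave `exp (2πi⟨ξ, N⟩)` is Lipschitz in `N` with constant `2π‖ξ‖`. Plancherel and
Cauchy–Schwarz then bound `(A 1 a)(N₁) - (A 1 a)(N₂)` by a multiple of `‖a‖ ‖N₁ - N₂‖`, and by
dilation `A s a` is operator Lipschitz with constant of order `‖a‖ / s`.

For a Hölder function `f` we have `‖f - A s f‖ ≲ s ^ α`. Put `δ = ‖N₁ - N₂‖`. The part `f - A δ f`
is already small in norm, and `A δ f` telescopes along the scales `2 ^ n δ`. As the averages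
commute, `A s f - A (2s) f = A s (f - A (2s) f) - A (2s) (f - A s f)`, so its operator Lipschitz
constant is of order `s ^ (α - 1)`, which is summable because `α < 1`.
-/

open MeasureTheory Complex FourierTransform Filter Topology
open scoped NNReal Real ComplexStarModule BoundedContinuousFunction

section Interpolation

variable {E F : Type*} [SeminormedAddCommGroup E] [SeminormedAddCommGroup F]
  {Δ : E →+ F} {A : ℝ → E →+ E} {K δ B α : ℝ} {f : E}

lemma norm_map_sub_le_of_commute (hα : α ≤ 1) (hδ : 0 ≤ δ)
    (hΔA : ∀ s, 0 < s → ∀ g, ‖Δ (A s g)‖ ≤ K * (δ / s) * ‖g‖)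
    (hA : ∀ s t g, A s (A t g) = A t (A s g))
    (hf : ∀ s, 0 < s → ‖f - A s f‖ ≤ B * s ^ α) (hK : 0 ≤ K) {s : ℝ} (hs : 0 < s) :
    ‖Δ (A s f) - Δ (A (2 * s) f)‖ ≤ 5 / 2 * K * B * δ * s ^ (α - 1) := by
  have hB : 0 ≤ B := by simpa using (norm_nonneg _).trans (hf 1 one_pos)
  have two_rpow_le : (2 : ℝ) ^ α ≤ 2 := by
    simpa using Real.rpow_le_rpow_of_exponent_le one_le_two hα
  have split : Δ (A s f) - Δ (A (2 * s) f) =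
      Δ (A s (f - A (2 * s) f)) - Δ (A (2 * s) (f - A s f)) := by
    simp only [map_sub, hA (2 * s) s f]
    abel
  calc ‖Δ (A s f) - Δ (A (2 * s) f)‖
      ≤ ‖Δ (A s (f - A (2 * s) f))‖ + ‖Δ (A (2 * s) (f - A s f))‖ := split ▸ norm_sub_le _ _
    _ ≤ K * (δ / s) * ‖f - A (2 * s) f‖ + K * (δ / (2 * s)) * ‖f - A s f‖ :=
        add_le_add (hΔA s hs _) (hΔA (2 * s) (by positivity) _)
    _ ≤ K * (δ / s) * (B * (2 * s ^ α)) + K * (δ / (2 * s)) * (B * s ^ α) := by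
        gcongr
        · refine (hf (2 * s) (by positivity)).trans ?_
          rw [Real.mul_rpow two_pos.le hs.le]
          gcongr
        · exact hf s hs
    _ = 5 / 2 * K * B * δ * s ^ (α - 1) := by
        rw [Real.rpow_sub_one hs.ne']
        field_simp
        ring

theorem norm_map_le_of_commuting_approximation {L : ℝ} (hα : α < 1) (hδ : 0 < δ)
    (hΔ : ∀ g, ‖Δ g‖ ≤ L * ‖g‖)
    (hΔA : ∀ s, 0 < s → ∀ g, ‖Δ (A s g)‖ ≤ K * (δ / s) * ‖g‖)
    (hA : ∀ s t g, A s (A t g) = A t (A s g))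
    (hf : ∀ s, 0 < s → ‖f - A s f‖ ≤ B * s ^ α) (hK : 0 ≤ K) (hL : 0 ≤ L) :
    ‖Δ f‖ ≤ (L + 5 / 2 * K / (1 - 2 ^ (α - 1))) * B * δ ^ α := by
  have ratio_lt_one : (2 : ℝ) ^ (α - 1) < 1 :=
    Real.rpow_lt_one_of_one_lt_of_neg one_lt_two (by linarith)
  have step (n : ℕ) : dist (Δ (A (2 ^ n * δ) f)) (Δ (A (2 ^ (n + 1) * δ) f)) ≤
      5 / 2 * K * B * δ ^ α * (2 ^ (α - 1)) ^ n := by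
    have scale_rpow : (2 ^ n * δ) ^ (α - 1) = (2 ^ (α - 1)) ^ n * (δ ^ α / δ) := by
      rw [Real.mul_rpow (by positivity) hδ.le, Real.rpow_sub_one hδ.ne',
        Real.rpow_pow_comm two_pos.le]
    have h := norm_map_sub_le_of_commute hα.le hδ.le hΔA hA hf hK
      (show 0 < 2 ^ n * δ by positivity)
    rw [dist_eq_norm, pow_succ', mul_assoc]
    refine h.trans_eq ?_
    rw [scale_rpow]
    field_simp
  have tendsto_zero : Tendsto (fun n : ℕ ↦ Δ (A (2 ^ n * δ) f)) atTop (𝓝 0) := by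
    refine squeeze_zero_norm (a := fun n : ℕ ↦ K * ‖f‖ * (1 / 2) ^ n) (fun n ↦ ?_) ?_
    · refine (hΔA _ (by positivity) f).trans_eq ?_
      rw [one_div, inv_pow]
      field_simp
    · simpa using (tendsto_pow_atTop_nhds_zero_of_lt_one (r := (1 / 2 : ℝ))
        (by norm_num) (by norm_num)).const_mul (K * ‖f‖)
  have coarse : ‖Δ (A δ f)‖ ≤ 5 / 2 * K * B * δ ^ α / (1 - 2 ^ (α - 1)) := by
    simpa using dist_le_of_le_geometric_of_tendsto₀ _ _ ratio_lt_one step tendsto_zero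
  calc ‖Δ f‖ = ‖Δ (f - A δ f) + Δ (A δ f)‖ := by rw [← map_add, sub_add_cancel]
    _ ≤ L * (B * δ ^ α) + 5 / 2 * K * B * δ ^ α / (1 - 2 ^ (α - 1)) :=
        (norm_add_le _ _).trans (add_le_add ((hΔ _).trans (by gcongr; exact hf δ hδ)) coarse)
    _ = (L + 5 / 2 * K / (1 - 2 ^ (α - 1))) * B * δ ^ α := by ring

end Interpolation

section Smoothing

variable {E F : Type*} [NormedAddCommGroup E] [NormedSpace ℝ E] [MeasurableSpace E] [BorelSpace E]
  [SecondCountableTopology E] [NormedAddCommGroup F]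
  (μ : Measure E) [IsProbabilityMeasure μ]

lemma integrable_comp_add_smul (s : ℝ) (a : E →ᵇ F) (z : E) :
    Integrable (fun y ↦ a (z + s • y)) μ :=
  .of_bound (Continuous.aestronglyMeasurable (by fun_prop)) ‖a‖
    (.of_forall fun _ ↦ a.norm_coe_le_norm _)

variable [NormedSpace ℝ F]

/-- The average of `a` over the dilate by `s` of the probability measure `μ`, recentred at the
argument: `smoothing μ s a z = ∫ a (z + s • y) dμ(y)`, as an operator on bounded continuous
functions. -/
noncomputable def smoothing (s : ℝ) : (E →ᵇ F) →+ (E →ᵇ F) where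
  toFun a := .ofNormedAddCommGroup (fun z ↦ ∫ y, a (z + s • y) ∂μ)
    (continuous_of_dominated (bound := fun _ ↦ ‖a‖) (fun z ↦ by fun_prop)
      (fun z ↦ .of_forall fun y ↦ a.norm_coe_le_norm _) (integrable_const _)
      (.of_forall fun y ↦ by fun_prop)) ‖a‖
    (fun z ↦ by
      simpa using norm_integral_le_of_norm_le_const (C := ‖a‖)
        (Eventually.of_forall (f := ae μ) fun y ↦ a.norm_coe_le_norm (z + s • y)))
  map_zero' := by ext; simp
  map_add' a b := by
    ext z
    exact integral_add (integrable_comp_add_smul μ s a z) (integrable_comp_add_smul μ s b z)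

lemma smoothing_apply (s : ℝ) (a : E →ᵇ F) (z : E) :
    smoothing μ s a z = ∫ y, a (z + s • y) ∂μ := rfl

lemma smoothing_one_comp_smul_apply {s : ℝ} (hs : s ≠ 0) (a : E →ᵇ F) (z : E) :
    smoothing μ 1 (a.compContinuous ⟨(s • ·), continuous_const_smul s⟩) (s⁻¹ • z) =
      smoothing μ s a z := by
  simp [smoothing_apply, smul_add, smul_inv_smul₀ hs]

lemma smoothing_comm (s t : ℝ) (a : E →ᵇ F) :
    smoothing μ s (smoothing μ t a) = smoothing μ t (smoothing μ s a) := by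
  ext z
  simp only [smoothing_apply]
  have integrable_prod : Integrable (fun p : E × E ↦ a (z + s • p.1 + t • p.2)) (μ.prod μ) :=
    .of_bound (Continuous.aestronglyMeasurable (by fun_prop)) ‖a‖
      (.of_forall fun _ ↦ a.norm_coe_le_norm _)
  rw [integral_integral_swap integrable_prod]
  simp only [add_right_comm]

lemma norm_sub_smoothing_le {C r : ℝ≥0} {a : E →ᵇ F} (ha : HolderWith C r a)
    (hμ : Integrable (fun y ↦ ‖y‖ ^ (r : ℝ)) μ) [CompleteSpace F] {s : ℝ} (hs : 0 ≤ s) :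
    ‖a - smoothing μ s a‖ ≤ C * (∫ y, ‖y‖ ^ (r : ℝ) ∂μ) * s ^ (r : ℝ) := by
  refine (BoundedContinuousFunction.norm_le (by positivity)).2 fun z ↦ ?_
  have const_eq : a z = ∫ _, a z ∂μ := by simp
  rw [BoundedContinuousFunction.sub_apply, smoothing_apply, const_eq,
    ← integral_sub (integrable_const _) (integrable_comp_add_smul μ s a z)]
  refine (norm_integral_le_of_norm_le (hμ.const_mul (C * s ^ (r : ℝ)))
    (.of_forall fun y ↦ ?_)).trans_eq ?_
  · simpa [dist_eq_norm, norm_smul, abs_of_nonneg hs, Real.mul_rpow hs, mul_assoc]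
      using ha.dist_le z (z + s • y)
  · rw [integral_const_mul]
    ring

end Smoothing

section HolderExtension

lemma holderWith_of_norm_sub_le {E F : Type*} [SeminormedAddCommGroup E] [SeminormedAddCommGroup F]
    {C r : ℝ≥0} {f : E → F} (hf : ∀ x y, ‖f x - f y‖ ≤ C * ‖x - y‖ ^ (r : ℝ)) :
    HolderWith C r f := fun x y ↦ by
  rw [edist_dist, edist_dist, ENNReal.ofReal_rpow_of_nonneg dist_nonneg r.coe_nonneg,
    ← ENNReal.ofReal_coe_nnreal, ← ENNReal.ofReal_mul C.coe_nonneg, dist_eq_norm, dist_eq_norm]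
  exact ENNReal.ofReal_le_ofReal (hf x y)

/-- The nearest-point retraction of the plane onto the square `[-R, R] × [-R, R]`. -/
noncomputable def squareRetraction {R : ℝ} (hR : 0 ≤ R) (z : ℂ) : ℂ :=
  ⟨Set.projIcc (-R) R (neg_le_self hR) z.re, Set.projIcc (-R) R (neg_le_self hR) z.im⟩

variable {R : ℝ} (hR : 0 ≤ R)

lemma lipschitzWith_squareRetraction : LipschitzWith 1 (squareRetraction hR) := by
  refine .of_dist_le_mul fun z w ↦ ?_
  have contraction (x y : ℝ) : |(Set.projIcc (-R) R (neg_le_self hR) x : ℝ) -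
      Set.projIcc (-R) R (neg_le_self hR) y| ≤ |x - y| := by
    simpa [Subtype.dist_eq, Real.dist_eq] using
      (LipschitzWith.projIcc (neg_le_self hR)).dist_le_mul x y
  rw [NNReal.coe_one, one_mul, Complex.dist_eq_re_im, Complex.dist_eq_re_im]
  exact Real.sqrt_le_sqrt (add_le_add (sq_le_sq.2 (contraction _ _)) (sq_le_sq.2 (contraction _ _)))

lemma norm_squareRetraction_le (z : ℂ) : ‖squareRetraction hR z‖ ≤ R + R :=
  (norm_le_abs_re_add_abs_im _).trans <| add_le_add
    (abs_le.2 (Set.projIcc (-R) R (neg_le_self hR) z.re).2)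
    (abs_le.2 (Set.projIcc (-R) R (neg_le_self hR) z.im).2)

lemma squareRetraction_of_norm_le {z : ℂ} (hz : ‖z‖ ≤ R) : squareRetraction hR z = z := by
  apply Complex.ext
  · exact congrArg Subtype.val <|
      Set.projIcc_of_mem (neg_le_self hR) (abs_le.1 ((abs_re_le_norm z).trans hz))
  · exact congrArg Subtype.val <|
      Set.projIcc_of_mem (neg_le_self hR) (abs_le.1 ((abs_im_le_norm z).trans hz))

theorem exists_boundedContinuous_holderWith_eqOn {F : Type*} [SeminormedAddCommGroup F]
    {C r : ℝ≥0} (hr : 0 < r) {f : ℂ → F} (hf : HolderWith C r f) {s : Set ℂ}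
    (hs : Bornology.IsBounded s) : ∃ g : ℂ →ᵇ F, HolderWith C r g ∧ s.EqOn f g := by
  obtain ⟨R, hR, hsR⟩ := hs.exists_pos_norm_le
  obtain ⟨M, hM⟩ := (isCompact_closedBall (0 : ℂ) (R + R)).exists_bound_of_continuousOn
    (hf.continuous hr).continuousOn
  have hρ := lipschitzWith_squareRetraction hR.le
  refine ⟨.ofNormedAddCommGroup (f ∘ squareRetraction hR.le)
    ((hf.continuous hr).comp hρ.continuous) M fun z ↦ hM _ ?_, ?_, fun z hz ↦ ?_⟩
  · simpa using norm_squareRetraction_le hR.le z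
  · simpa using hf.comp (holderWith_one.2 hρ)
  · exact congrArg f (squareRetraction_of_norm_le hR.le (hsR z hz)).symm

end HolderExtension

section L2

variable {X : Type*} [MeasurableSpace X] {μ : Measure X}

lemma integral_norm_mul_norm_le {E : Type*} [NormedAddCommGroup E] {F G : X → E}
    (hF : MemLp F 2 μ) (hG : MemLp G 2 μ) {A B : ℝ} (hA : 0 ≤ A) (hB : 0 ≤ B)
    (hFA : ∫ x, ‖F x‖ ^ 2 ∂μ ≤ A ^ 2) (hGB : ∫ x, ‖G x‖ ^ 2 ∂μ ≤ B ^ 2) :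
    ∫ x, ‖F x‖ * ‖G x‖ ∂μ ≤ A * B := by
  have h := integral_mul_norm_le_Lp_mul_Lq (μ := μ) Real.HolderConjugate.two_two
    (by simpa using hF) (by simpa using hG)
  simp only [Real.rpow_two, ← Real.sqrt_eq_rpow] at h
  exact h.trans (mul_le_mul (Real.sqrt_le_iff.2 ⟨hA, hFA⟩) (Real.sqrt_le_iff.2 ⟨hB, hGB⟩)
    (Real.sqrt_nonneg _) hA)

variable {H : Type*} [NormedAddCommGroup H] [InnerProductSpace ℂ H]

lemma integrable_mul_inner {a : X → ℂ} {M : ℝ} (ha : AEStronglyMeasurable a μ)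
    (haM : ∀ x, ‖a x‖ ≤ M) {p q : X → H} (hp : MemLp p 2 μ) (hq : MemLp q 2 μ) :
    Integrable (fun x ↦ a x * inner ℂ (q x) (p x)) μ := by
  have integrable_inner : Integrable (fun x ↦ inner ℂ (q x) (p x)) μ :=
    (hq.norm.integrable_mul hp.norm).mono' (hq.1.inner hp.1)
      (.of_forall fun x ↦ norm_inner_le_norm _ _)
  exact integrable_inner.bdd_mul ha (.of_forall haM)

lemma norm_integral_mul_inner_sub_le {a : X → ℂ} {M S P Q : ℝ} (hM : 0 ≤ M) (hS : 0 ≤ S)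
    (hP : 0 ≤ P) (hQ : 0 ≤ Q) (ha : ∀ x, ‖a x‖ ≤ M) {p₁ p₂ q₁ q₂ : X → H}
    (hp₁ : MemLp p₁ 2 μ) (hp₂ : MemLp p₂ 2 μ) (hq₁ : MemLp q₁ 2 μ) (hq₂ : MemLp q₂ 2 μ)
    (hp₂P : ∫ x, ‖p₂ x‖ ^ 2 ∂μ ≤ P ^ 2) (hq₁Q : ∫ x, ‖q₁ x‖ ^ 2 ∂μ ≤ Q ^ 2)
    (hpS : ∫ x, ‖(p₁ - p₂) x‖ ^ 2 ∂μ ≤ (S * P) ^ 2)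
    (hqS : ∫ x, ‖(q₁ - q₂) x‖ ^ 2 ∂μ ≤ (S * Q) ^ 2) :
    ‖∫ x, (a x * inner ℂ (q₁ x) (p₁ x) - a x * inner ℂ (q₂ x) (p₂ x)) ∂μ‖ ≤
      2 * M * S * P * Q := by
  have pointwise (x : X) : ‖a x * inner ℂ (q₁ x) (p₁ x) - a x * inner ℂ (q₂ x) (p₂ x)‖ ≤
      M * (‖q₁ x‖ * ‖(p₁ - p₂) x‖ + ‖(q₁ - q₂) x‖ * ‖p₂ x‖) := by
    have split : inner ℂ (q₁ x) (p₁ x) - inner ℂ (q₂ x) (p₂ x) =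
        inner ℂ (q₁ x) ((p₁ - p₂) x) + inner ℂ ((q₁ - q₂) x) (p₂ x) := by
      simp only [Pi.sub_apply, inner_sub_right, inner_sub_left]
      ring
    rw [← mul_sub, split, norm_mul]
    exact mul_le_mul (ha x) ((norm_add_le _ _).trans
      (add_le_add (norm_inner_le_norm _ _) (norm_inner_le_norm _ _))) (norm_nonneg _) hM
  have int₁ : Integrable (fun x ↦ ‖q₁ x‖ * ‖(p₁ - p₂) x‖) μ :=
    hq₁.norm.integrable_mul (hp₁.sub hp₂).norm
  have int₂ : Integrable (fun x ↦ ‖(q₁ - q₂) x‖ * ‖p₂ x‖) μ :=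
    (hq₁.sub hq₂).norm.integrable_mul hp₂.norm
  calc _ ≤ ∫ x, M * (‖q₁ x‖ * ‖(p₁ - p₂) x‖ + ‖(q₁ - q₂) x‖ * ‖p₂ x‖) ∂μ :=
        norm_integral_le_of_norm_le ((int₁.add int₂).const_mul M) (.of_forall pointwise)
    _ = M * (∫ x, ‖q₁ x‖ * ‖(p₁ - p₂) x‖ ∂μ + ∫ x, ‖(q₁ - q₂) x‖ * ‖p₂ x‖ ∂μ) := by
        rw [integral_const_mul, integral_add int₁ int₂]
    _ ≤ M * (Q * (S * P) + S * Q * P) := by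
        gcongr
        · exact integral_norm_mul_norm_le hq₁ (hp₁.sub hp₂) hQ (by positivity) hq₁Q hpS
        · exact integral_norm_mul_norm_le (hq₁.sub hq₂) hp₂ (by positivity) hP hqS hp₂P
    _ = 2 * M * S * P * Q := by ring

end L2

section Plancherel

variable {V H : Type*} [NormedAddCommGroup V] [InnerProductSpace ℝ V] [FiniteDimensional ℝ V]
  [MeasurableSpace V] [BorelSpace V] [NormedAddCommGroup H] [InnerProductSpace ℂ H]
  {E : Type*} [NormedAddCommGroup E] [NormedSpace ℂ E]

lemma fourier_sub_of_integrable {F G : V → E} (hF : Integrable F) (hG : Integrable G) :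
    𝓕 (F - G) = 𝓕 F - 𝓕 G := by
  ext k
  simp only [Pi.sub_apply, Real.fourier_eq, smul_sub]
  exact integral_sub ((Real.fourierIntegral_convergent_iff k).2 hF)
    ((Real.fourierIntegral_convergent_iff k).2 hG)

lemma fourier_clm_apply {F : V → E →L[ℂ] H} (hF : Integrable F) (k : V) (u : E) :
    𝓕 F k u = 𝓕 (fun ξ ↦ F ξ u) k := by
  have integrable_char_smul : Integrable fun ξ ↦ 𝐞 (-inner ℝ ξ k) • F ξ :=
    (Real.fourierIntegral_convergent_iff k).2 hF
  rw [Real.fourier_eq, Real.fourier_eq, ContinuousLinearMap.integral_apply integrable_char_smul]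
  rfl

variable [CompleteSpace H]

theorem integral_norm_sq_fourier_eq {F : V → H} (hF : Continuous F) (hFi : Integrable F)
    (hFi' : Integrable (𝓕 F)) : ∫ k, ‖𝓕 F k‖ ^ 2 = ∫ ξ, ‖F ξ‖ ^ 2 := by
  have parseval := VectorFourier.integral_sesq_fourierIntegral_eq_neg_flip (μ := volume)
    (ν := volume) (innerSL ℂ (E := H)) Real.continuous_fourierChar (L := innerₗ V)
    (by exact continuous_inner) hFi hFi'
  have inversion (x : V) :
      VectorFourier.fourierIntegral Real.fourierChar volume (-(innerₗ V).flip) (𝓕 F) x = F x := by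
    conv_rhs => rw [← hF.fourierInv_fourier_eq hFi hFi', Real.fourierInv_eq]
    simp [VectorFourier.fourierIntegral]
  simp_rw [inversion] at parseval
  have inner_eq : ∫ k, inner ℂ (𝓕 F k) (𝓕 F k) = ∫ ξ, inner ℂ (F ξ) (F ξ) := parseval
  simp only [inner_self_eq_norm_sq_to_K, coe_algebraMap, ← ofReal_pow] at inner_eq
  rw [integral_complex_ofReal, integral_complex_ofReal] at inner_eq
  exact ofReal_injective inner_eq

theorem integral_norm_sq_fourier_apply_eq {F : V → E →L[ℂ] H} (hF : Continuous F)
    (hFi : Integrable F) (hFi' : Integrable (𝓕 F)) (u : E) :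
    ∫ k, ‖𝓕 F k u‖ ^ 2 = ∫ ξ, ‖F ξ u‖ ^ 2 := by
  have fourier_eq : 𝓕 (fun ξ ↦ F ξ u) = fun k ↦ 𝓕 F k u := by
    ext k
    exact (fourier_clm_apply hFi k u).symm
  rw [← integral_norm_sq_fourier_eq (by fun_prop) (hFi.apply_continuousLinearMap u)
    (fourier_eq ▸ hFi'.apply_continuousLinearMap u), fourier_eq]

end Plancherel

section PlaneWave

variable {A : Type*} [CStarAlgebra A]

lemma coe_expUnitary_smul (a : selfAdjoint A) (t : ℝ) :
    (selfAdjoint.expUnitary (t • a) : A) = NormedSpace.exp (t • I • (a : A)) := by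
  rw [selfAdjoint.expUnitary_coe, selfAdjoint.val_smul, smul_comm]

theorem norm_expUnitary_sub_le (a b : selfAdjoint A) :
    ‖(selfAdjoint.expUnitary a - selfAdjoint.expUnitary b : A)‖ ≤ ‖a - b‖ := by
  let +nondep : NormedAlgebra ℚ A := .restrictScalars ℚ ℂ A
  let U (t : ℝ) : A := selfAdjoint.expUnitary (t • a)
  let V (t : ℝ) : A := selfAdjoint.expUnitary ((1 - t) • b)
  have derivU (t : ℝ) : HasDerivAt U (U t * (I • (a : A))) t := by
    simp only [U, coe_expUnitary_smul]
    exact hasDerivAt_exp_smul_const _ t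
  have derivV (t : ℝ) : HasDerivAt V (-((I • (b : A)) * V t)) t := by
    simp only [V, coe_expUnitary_smul]
    simpa [Function.comp_def] using
      (hasDerivAt_exp_smul_const' (I • (b : A)) (1 - t)).scomp t ((hasDerivAt_id t).const_sub 1)
  have norm_deriv (t : ℝ) :
      ‖U t * (I • (a : A)) * V t + U t * -((I • (b : A)) * V t)‖ = ‖a - b‖ := by
    have factor : U t * (I • (a : A)) * V t + U t * -((I • (b : A)) * V t) =
        U t * ((I • (a - b : A)) * V t) := by
      rw [smul_sub]
      noncomm_ring
    rw [factor, CStarRing.norm_mem_unitary_mul _ (Subtype.prop _),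
      CStarRing.norm_mul_mem_unitary _ (Subtype.prop _), norm_smul, norm_I, one_mul]
    rfl
  simpa [U, V, selfAdjoint.expUnitary_zero] using norm_image_sub_le_of_norm_deriv_le_segment_01'
    (fun t _ ↦ ((derivU t).mul (derivV t)).hasDerivWithinAt) fun t _ ↦ (norm_deriv t).le

/-- The unitary `exp (2πi⟨ξ, N⟩)`, where `⟨ξ, N⟩ = ℜ (conj ξ • N)` extends the real inner product
of the plane to operators. -/
noncomputable def planeWave (N : A) (ξ : ℂ) : unitary A :=
  selfAdjoint.expUnitary ((2 * π) • ℜ (star ξ • N))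

lemma continuous_planeWave (N : A) : Continuous (planeWave N) := by
  have continuous_realPart : Continuous (realPart : A →ₗ[ℝ] selfAdjoint A) :=
    AddMonoidHomClass.continuous_of_bound _ 1 fun x ↦ by simpa using realPart.norm_le x
  have continuous_phase : Continuous fun ξ : ℂ ↦ ℜ (star ξ • N) :=
    continuous_realPart.comp (by fun_prop)
  exact selfAdjoint.continuous_expUnitary.comp (continuous_phase.const_smul (2 * π))

lemma norm_planeWave_sub_le (N₁ N₂ : A) (ξ : ℂ) :
    ‖(planeWave N₁ ξ - planeWave N₂ ξ : A)‖ ≤ 2 * π * ‖N₁ - N₂‖ * ‖ξ‖ := by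
  refine (norm_expUnitary_sub_le _ _).trans ?_
  rw [← smul_sub, ← map_sub, ← smul_sub]
  calc ‖(2 * π) • ℜ (star ξ • (N₁ - N₂))‖
      = 2 * π * ‖ℜ (star ξ • (N₁ - N₂))‖ := by
        rw [norm_smul, Real.norm_of_nonneg Real.two_pi_pos.le]
    _ ≤ 2 * π * ‖star ξ • (N₁ - N₂)‖ := by
        gcongr
        exact realPart.norm_le _
    _ = 2 * π * ‖N₁ - N₂‖ * ‖ξ‖ := by
        rw [norm_smul, norm_star]
        ring

lemma planeWave_eq_cfc (N : A) [IsStarNormal N] (ξ : ℂ) :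
    (planeWave N ξ : A) = cfc (fun z ↦ (𝐞 (inner ℝ ξ z) : ℂ)) N := by
  have realPart_eq : (ℜ (star ξ • N) : A) = cfc (fun z ↦ ((inner ℝ ξ z : ℝ) : ℂ)) N := by
    have : IsStarNormal (cfc (fun z ↦ star ξ * z) N) := cfc_predicate _ N
    rw [← cfc_const_mul_id (star ξ) N, ← cfc_re_id _ this, ← cfc_comp' ..]
    simp [Complex.inner, mul_comm]
  have generator_eq : I • (((2 * π) • ℜ (star ξ • N) : selfAdjoint A) : A) =
      cfc (fun z ↦ I * (2 * π : ℝ) * (inner ℝ ξ z : ℝ)) N := by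
    rw [selfAdjoint.val_smul, realPart_eq, cfc_const_mul .., mul_smul I, coe_smul]
  have : IsStarNormal (cfc (fun z ↦ I * (2 * π : ℝ) * (inner ℝ ξ z : ℝ)) N) :=
    cfc_predicate _ N
  rw [planeWave, selfAdjoint.expUnitary_coe, generator_eq, ← CFC.complex_exp_eq_normedSpace_exp,
    ← cfc_comp' ..]
  simp only [Real.fourierChar_apply, ofReal_mul, mul_comm I, mul_right_comm _ I]

end PlaneWave

section Gaussian

lemma integrable_exp_neg_mul_sq_norm {V : Type*} [NormedAddCommGroup V] [InnerProductSpace ℝ V]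
    [FiniteDimensional ℝ V] [MeasurableSpace V] [BorelSpace V] {b : ℝ} (hb : 0 < b) :
    Integrable fun v : V ↦ Real.exp (-b * ‖v‖ ^ 2) := by
  have h := (GaussianFourier.integrable_cexp_neg_mul_sq_norm_add (V := V) (b := (b : ℂ))
    (by simpa using hb) 0 0).norm
  simpa [Complex.norm_exp, ← ofReal_pow] using h

lemma exp_neg_mul_norm_sub_sq_le {E : Type*} [SeminormedAddCommGroup E] {b R : ℝ} (hb : 0 ≤ b)
    {k z : E} (hz : ‖z‖ ≤ R) :
    Real.exp (-b * ‖k - z‖ ^ 2) ≤ Real.exp (b * R ^ 2) * Real.exp (-(b / 2) * ‖k‖ ^ 2) := by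
  have norm_sq_le : ‖k‖ ^ 2 ≤ 2 * (‖k - z‖ ^ 2 + R ^ 2) :=
    calc ‖k‖ ^ 2 ≤ (‖k - z‖ + R) ^ 2 := by
          gcongr
          linarith [norm_sub_norm_le k z]
      _ ≤ 2 * (‖k - z‖ ^ 2 + R ^ 2) := add_sq_le
  rw [← Real.exp_add, Real.exp_le_exp]
  nlinarith

/-- The Gaussian `√2 exp (-π‖z‖²)` on the plane. It is its own Fourier transform, and the factor
`√2` makes its square a probability density. -/
noncomputable def gaussian (z : ℂ) : ℝ := √2 * Real.exp (-π * ‖z‖ ^ 2)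

@[fun_prop]
lemma continuous_gaussian : Continuous gaussian := by
  unfold gaussian
  fun_prop

lemma gaussian_nonneg (z : ℂ) : 0 ≤ gaussian z := by
  unfold gaussian
  positivity

lemma norm_gaussian (z : ℂ) : ‖(gaussian z : ℂ)‖ = gaussian z := by
  rw [norm_real, Real.norm_of_nonneg (gaussian_nonneg z)]

lemma gaussian_le (z : ℂ) : gaussian z ≤ √2 :=
  mul_le_of_le_one_right (Real.sqrt_nonneg 2) <| Real.exp_le_one_iff.2 <| by
    nlinarith [Real.pi_pos, sq_nonneg ‖z‖]

lemma gaussian_sq (z : ℂ) : gaussian z ^ 2 = 2 * Real.exp (-(2 * π) * ‖z‖ ^ 2) := by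
  rw [gaussian, mul_pow, Real.sq_sqrt zero_le_two, ← Real.exp_nat_mul]
  ring_nf

lemma integrable_gaussian : Integrable gaussian :=
  (integrable_exp_neg_mul_sq_norm Real.pi_pos).const_mul _

lemma integrable_gaussian_sq : Integrable fun z ↦ gaussian z ^ 2 := by
  simp only [gaussian_sq]
  exact (integrable_exp_neg_mul_sq_norm Real.two_pi_pos).const_mul _

lemma integral_gaussian_sq : ∫ z, gaussian z ^ 2 = 1 := by
  simp only [gaussian_sq]
  rw [integral_const_mul, GaussianFourier.integral_rexp_neg_mul_sq_norm Real.two_pi_pos,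
    finrank_real_complex]
  norm_num
  field_simp

lemma gaussian_sq_mul_sq_norm_le (z : ℂ) :
    gaussian z ^ 2 * ‖z‖ ^ 2 ≤ Real.exp (-π * ‖z‖ ^ 2) := by
  have two_mul_le : 2 * ‖z‖ ^ 2 ≤ Real.exp (π * ‖z‖ ^ 2) := by
    nlinarith [Real.add_one_le_exp (π * ‖z‖ ^ 2), Real.pi_gt_three, sq_nonneg ‖z‖]
  calc gaussian z ^ 2 * ‖z‖ ^ 2 = 2 * ‖z‖ ^ 2 * Real.exp (-(2 * π) * ‖z‖ ^ 2) := by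
        rw [gaussian_sq]
        ring
    _ ≤ Real.exp (π * ‖z‖ ^ 2) * Real.exp (-(2 * π) * ‖z‖ ^ 2) := by gcongr
    _ = Real.exp (-π * ‖z‖ ^ 2) := by
        rw [← Real.exp_add]
        ring_nf

lemma integrable_gaussian_sq_mul_sq_norm : Integrable fun z ↦ gaussian z ^ 2 * ‖z‖ ^ 2 :=
  (integrable_exp_neg_mul_sq_norm Real.pi_pos).mono' (by fun_prop) <| .of_forall fun z ↦ by
    simpa using gaussian_sq_mul_sq_norm_le z

lemma integral_gaussian_sq_mul_sq_norm_le : ∫ z, gaussian z ^ 2 * ‖z‖ ^ 2 ≤ 1 := by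
  refine (integral_mono integrable_gaussian_sq_mul_sq_norm
    (integrable_exp_neg_mul_sq_norm Real.pi_pos) gaussian_sq_mul_sq_norm_le).trans_eq ?_
  rw [GaussianFourier.integral_rexp_neg_mul_sq_norm Real.pi_pos]
  simp

theorem fourier_gaussian : 𝓕 (fun z ↦ (gaussian z : ℂ)) = fun z ↦ (gaussian z : ℂ) := by
  have factor : (fun z ↦ (gaussian z : ℂ)) =
      (√2 : ℂ) • fun z : ℂ ↦ cexp (-π * ‖z‖ ^ 2) := by
    ext z
    simp [gaussian]
  have self_dual : 𝓕 (fun z : ℂ ↦ cexp (-π * ‖z‖ ^ 2)) =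
      fun z : ℂ ↦ cexp (-π * ‖z‖ ^ 2) := by
    ext w
    rw [fourier_gaussian_innerProductSpace (by simp [Real.pi_pos])]
    have : (π : ℂ) ≠ 0 := by simp [Real.pi_ne_zero]
    simp only [div_self this, one_cpow, one_mul]
    congr 1
    field_simp
  rw [factor]
  exact (VectorFourier.fourierIntegral_const_smul _ _ _ _ _).trans (congrArg _ self_dual)

lemma exists_gaussian_sub_le {s : Set ℂ} (hs : Bornology.IsBounded s) :
    ∃ D, ∀ k, ∀ z ∈ s, gaussian (k - z) ≤ D * Real.exp (-(π / 2) * ‖k‖ ^ 2) := by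
  obtain ⟨R, -, hsR⟩ := hs.exists_pos_norm_le
  refine ⟨√2 * Real.exp (π * R ^ 2), fun k z hz ↦ ?_⟩
  rw [gaussian, mul_assoc]
  gcongr
  exact exp_neg_mul_norm_sub_sq_le Real.pi_pos.le (hsR z hz)

/-- The probability measure on the plane with density the square of `gaussian`. -/
noncomputable def gaussianMeasure : Measure ℂ :=
  volume.withDensity fun z ↦ ENNReal.ofReal (gaussian z ^ 2)

instance : IsProbabilityMeasure gaussianMeasure where
  measure_univ := by
    rw [gaussianMeasure, withDensity_apply _ .univ, setLIntegral_univ,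
      ← ofReal_integral_eq_lintegral_ofReal integrable_gaussian_sq
        (.of_forall fun z ↦ sq_nonneg _), integral_gaussian_sq, ENNReal.ofReal_one]

lemma integral_gaussianMeasure {F : Type*} [NormedAddCommGroup F] [NormedSpace ℝ F] (f : ℂ → F) :
    ∫ z, f z ∂gaussianMeasure = ∫ z, gaussian z ^ 2 • f z := by
  rw [gaussianMeasure, integral_withDensity_eq_integral_toReal_smul (by fun_prop) (by simp)]
  simp [ENNReal.toReal_ofReal (sq_nonneg _)]

lemma integrable_sq_norm_gaussianMeasure : Integrable (fun z ↦ ‖z‖ ^ 2) gaussianMeasure := by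
  rw [gaussianMeasure, integrable_withDensity_iff_integrable_smul' (by fun_prop) (by simp)]
  simpa [ENNReal.toReal_ofReal (sq_nonneg _)] using integrable_gaussian_sq_mul_sq_norm

lemma rpow_le_one_add_sq {x r : ℝ} (hx : 0 ≤ x) (hr₀ : 0 ≤ r) (hr : r ≤ 2) :
    x ^ r ≤ 1 + x ^ 2 := by
  obtain hx1 | hx1 := le_total x 1
  · exact (Real.rpow_le_one hx hx1 hr₀).trans (by nlinarith)
  · exact (Real.rpow_le_rpow_of_exponent_le hx1 hr).trans (by simp)

lemma integrable_norm_rpow_gaussianMeasure {r : ℝ} (hr₀ : 0 ≤ r) (hr : r ≤ 2) :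
    Integrable (fun z ↦ ‖z‖ ^ r) gaussianMeasure := by
  refine ((integrable_const (1 : ℝ)).add integrable_sq_norm_gaussianMeasure).mono'
    (Measurable.aestronglyMeasurable (by fun_prop)) (.of_forall fun z ↦ ?_)
  rw [Real.norm_of_nonneg (by positivity)]
  exact rpow_le_one_add_sq (norm_nonneg z) hr₀ hr

lemma integral_norm_rpow_gaussianMeasure_le {r : ℝ} (hr₀ : 0 ≤ r) (hr : r ≤ 2) :
    ∫ z, ‖z‖ ^ r ∂gaussianMeasure ≤ 2 := by
  have integrable_majorant : Integrable (fun z ↦ 1 + ‖z‖ ^ 2) gaussianMeasure :=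
    (integrable_const (1 : ℝ)).add integrable_sq_norm_gaussianMeasure
  calc ∫ z, ‖z‖ ^ r ∂gaussianMeasure
      ≤ ∫ z, (1 + ‖z‖ ^ 2) ∂gaussianMeasure :=
        integral_mono (integrable_norm_rpow_gaussianMeasure hr₀ hr) integrable_majorant
          fun z ↦ rpow_le_one_add_sq (norm_nonneg z) hr₀ hr
    _ = 1 + ∫ z, gaussian z ^ 2 * ‖z‖ ^ 2 := by
        rw [integral_add (integrable_const 1) integrable_sq_norm_gaussianMeasure,
          integral_gaussianMeasure fun z ↦ ‖z‖ ^ 2]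
        simp
    _ ≤ 2 := by linarith [integral_gaussian_sq_mul_sq_norm_le]

end Gaussian

section GaussianOp

variable {A : Type*} [CStarAlgebra A]

/-- The operator `γ(k - N)` for the Gaussian `γ` and a normal element `N`. -/
noncomputable def gaussianOp (N : A) (k : ℂ) : A := cfc (fun z ↦ (gaussian (k - z) : ℂ)) N

lemma isSelfAdjoint_gaussianOp (N : A) (k : ℂ) : IsSelfAdjoint (gaussianOp N k) := by
  rw [isSelfAdjoint_iff, gaussianOp, ← cfc_star]
  simp

lemma norm_gaussianOp_le (N : A) (k : ℂ) : ‖gaussianOp N k‖ ≤ √2 :=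
  norm_cfc_le (by positivity) fun z _ ↦ (norm_gaussian _).trans_le (gaussian_le _)

lemma integrable_gaussianOp (N : A) [IsStarNormal N] : Integrable (gaussianOp N) := by
  obtain ⟨D, hD⟩ := exists_gaussian_sub_le (spectrum.isBounded (𝕜 := ℂ) N)
  refine integrable_cfc _ (fun k ↦ D * Real.exp (-(π / 2) * ‖k‖ ^ 2)) N
    (Continuous.continuousOn (by fun_prop)) (.of_forall fun k z hz ↦ ?_)
    ((integrable_exp_neg_mul_sq_norm (by positivity)).const_mul D).hasFiniteIntegral
  exact (norm_gaussian _).trans_le (hD k z hz)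

/-- The plane wave `exp (2πi⟨ξ, N⟩)` damped by the Gaussian. -/
noncomputable def wavePacket (N : A) (ξ : ℂ) : A := (gaussian ξ : ℂ) • (planeWave N ξ : A)

lemma continuous_wavePacket (N : A) : Continuous (wavePacket N) :=
  (continuous_ofReal.comp continuous_gaussian).smul
    (continuous_subtype_val.comp (continuous_planeWave N))

lemma integrable_wavePacket (N : A) : Integrable (wavePacket N) := by
  refine (integrable_gaussian.mul_const ‖(1 : A)‖).mono'
    (continuous_wavePacket N).aestronglyMeasurable (.of_forall fun ξ ↦ ?_)
  rw [wavePacket, norm_smul, norm_gaussian, ← mul_one (planeWave N ξ : A),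
    CStarRing.norm_coe_unitary_mul]

lemma norm_wavePacket_sub_le (N₁ N₂ : A) (ξ : ℂ) :
    ‖wavePacket N₁ ξ - wavePacket N₂ ξ‖ ≤ 2 * π * ‖N₁ - N₂‖ * (gaussian ξ * ‖ξ‖) := by
  rw [wavePacket, wavePacket, ← smul_sub, norm_smul, norm_gaussian, mul_left_comm]
  exact mul_le_mul_of_nonneg_left (norm_planeWave_sub_le N₁ N₂ ξ) (gaussian_nonneg ξ)

theorem fourier_wavePacket (N : A) [IsStarNormal N] : 𝓕 (wavePacket N) = gaussianOp N := by
  ext k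
  have integrand_eq (ξ : ℂ) : 𝐞 (-inner ℝ ξ k) • wavePacket N ξ =
      cfc (fun z ↦ 𝐞 (-inner ℝ ξ (k - z)) • (gaussian ξ : ℂ)) N := by
    rw [wavePacket, planeWave_eq_cfc, Circle.smul_def, smul_smul, ← cfc_const_mul ..]
    refine cfc_congr fun z _ ↦ ?_
    rw [inner_sub_right, neg_sub, sub_eq_neg_add, AddChar.map_add_eq_mul, Circle.smul_def,
      Circle.coe_mul, smul_eq_mul, mul_right_comm]
  rw [Real.fourier_eq]
  simp only [integrand_eq]
  rw [← cfc_integral _ gaussian N (Continuous.continuousOn (by fun_prop)) ?_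
    integrable_gaussian.hasFiniteIntegral, gaussianOp]
  · simp_rw [← Real.fourier_eq, fourier_gaussian]
  · simp [abs_of_nonneg (gaussian_nonneg _)]

lemma smoothing_gaussianMeasure_one_apply (a : ℂ →ᵇ ℂ) (z : ℂ) :
    smoothing gaussianMeasure 1 a z = ∫ k, a k * (gaussian (k - z) : ℂ) ^ 2 := by
  rw [smoothing_apply, integral_gaussianMeasure, ← integral_sub_right_eq_self _ z]
  simp [mul_comm]

theorem cfc_smoothing_gaussianMeasure (a : ℂ →ᵇ ℂ) (N : A) [IsStarNormal N] :
    cfc (smoothing gaussianMeasure 1 a) N = ∫ k, a k • gaussianOp N k ^ 2 := by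
  obtain ⟨D, hD⟩ := exists_gaussian_sub_le (spectrum.isBounded (𝕜 := ℂ) N)
  have integrand_eq (k : ℂ) : a k • gaussianOp N k ^ 2 =
      cfc (fun z ↦ a k * (gaussian (k - z) : ℂ) ^ 2) N := by
    rw [gaussianOp, ← cfc_pow .., ← cfc_const_mul ..]
  simp only [integrand_eq]
  rw [← cfc_integral _ (fun k ↦ ‖a‖ * (√2 * (D * Real.exp (-(π / 2) * ‖k‖ ^ 2)))) N
    (Continuous.continuousOn (by fun_prop)) (.of_forall fun k z hz ↦ ?_)]
  · simp_rw [← smoothing_gaussianMeasure_one_apply]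
  · exact (((integrable_exp_neg_mul_sq_norm (by positivity)).const_mul D).const_mul _).const_mul _
      |>.hasFiniteIntegral
  · rw [norm_mul, norm_pow, norm_gaussian, pow_two]
    have := gaussian_nonneg (k - z)
    gcongr
    · exact a.norm_coe_le_norm k
    · exact gaussian_le _
    · exact hD k z hz

lemma integrable_smul_gaussianOp_sq (a : ℂ →ᵇ ℂ) (N : A) [IsStarNormal N] :
    Integrable fun k ↦ a k • gaussianOp N k ^ 2 := by
  have hG := integrable_gaussianOp N
  simp only [pow_two]
  exact (hG.bdd_mul hG.aestronglyMeasurable (.of_forall (norm_gaussianOp_le N))).bdd_smul ‖a‖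
    a.continuous.aestronglyMeasurable (.of_forall a.norm_coe_le_norm)

end GaussianOp

section FunctionalCalculus

variable {A : Type*} [CStarAlgebra A]

lemma cfc_smoothing_eq_cfc_smoothing_one (μ : Measure ℂ) [IsProbabilityMeasure μ] {s : ℝ}
    (hs : s ≠ 0) (a : ℂ →ᵇ ℂ) (N : A) [IsStarNormal N] :
    cfc (smoothing μ s a) N =
      cfc (smoothing μ 1 (a.compContinuous ⟨(s • ·), continuous_const_smul s⟩)) (s⁻¹ • N) := by
  rw [← cfc_comp_smul s⁻¹ _ N]
  simp only [smoothing_one_comp_smul_apply μ hs]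

/-- The map `g ↦ g(N₁) - g(N₂)` on bounded continuous functions. -/
noncomputable def cfcSub (N₁ N₂ : A) : (ℂ →ᵇ ℂ) →+ A where
  toFun g := cfc g N₁ - cfc g N₂
  map_zero' := by simp
  map_add' g h := by
    have map_add (N : A) : cfc ⇑(g + h) N = cfc g N + cfc h N := cfc_add N g h
    rw [map_add, map_add, add_sub_add_comm]

lemma norm_cfcSub_le (N₁ N₂ : A) (g : ℂ →ᵇ ℂ) : ‖cfcSub N₁ N₂ g‖ ≤ 2 * ‖g‖ := by
  have norm_cfc (N : A) : ‖cfc g N‖ ≤ ‖g‖ :=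
    norm_cfc_le (norm_nonneg g) fun z _ ↦ g.norm_coe_le_norm z
  exact (norm_sub_le _ _).trans (by linarith [norm_cfc N₁, norm_cfc N₂])

end FunctionalCalculus

section OperatorLipschitz

variable {H : Type*} [NormedAddCommGroup H] [InnerProductSpace ℂ H] [CompleteSpace H]

lemma memLp_gaussianOp_apply (N : H →L[ℂ] H) [IsStarNormal N] (u : H) :
    MemLp (fun k ↦ gaussianOp N k u) 2 := by
  have hG : Integrable fun k ↦ gaussianOp N k u :=
    (integrable_gaussianOp N).apply_continuousLinearMap u
  refine (memLp_two_iff_integrable_sq_norm hG.aestronglyMeasurable).2 ?_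
  refine (hG.norm.const_mul (√2 * ‖u‖)).mono' (hG.aestronglyMeasurable.norm.pow 2)
    (.of_forall fun k ↦ ?_)
  rw [norm_pow, norm_norm, pow_two]
  gcongr
  exact (gaussianOp N k).le_of_opNorm_le (norm_gaussianOp_le N k) u

lemma integral_norm_sq_gaussianOp_apply (N : H →L[ℂ] H) [IsStarNormal N] (u : H) :
    ∫ k, ‖gaussianOp N k u‖ ^ 2 = ‖u‖ ^ 2 := by
  rw [← fourier_wavePacket, integral_norm_sq_fourier_apply_eq (continuous_wavePacket N)
    (integrable_wavePacket N) (fourier_wavePacket N ▸ integrable_gaussianOp N)]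
  simp [wavePacket, norm_smul, Unitary.norm_map, mul_pow, integral_mul_const, integral_gaussian_sq]

theorem integral_norm_sq_gaussianOp_sub_apply_le (N₁ N₂ : H →L[ℂ] H) [IsStarNormal N₁]
    [IsStarNormal N₂] (u : H) :
    ∫ k, ‖gaussianOp N₁ k u - gaussianOp N₂ k u‖ ^ 2 ≤ (2 * π * ‖N₁ - N₂‖ * ‖u‖) ^ 2 := by
  have fourier_eq : 𝓕 (wavePacket N₁ - wavePacket N₂) = gaussianOp N₁ - gaussianOp N₂ := by
    rw [fourier_sub_of_integrable (integrable_wavePacket N₁) (integrable_wavePacket N₂),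
      fourier_wavePacket, fourier_wavePacket]
  have norm_sq_le (ξ : ℂ) : ‖(wavePacket N₁ - wavePacket N₂) ξ u‖ ^ 2 ≤
      (2 * π * ‖N₁ - N₂‖ * ‖u‖) ^ 2 * (gaussian ξ ^ 2 * ‖ξ‖ ^ 2) := by
    refine (pow_le_pow_left₀ (norm_nonneg _) (ContinuousLinearMap.le_of_opNorm_le _
      (norm_wavePacket_sub_le N₁ N₂ ξ) u) 2).trans_eq ?_
    ring
  calc ∫ k, ‖gaussianOp N₁ k u - gaussianOp N₂ k u‖ ^ 2
      = ∫ k, ‖𝓕 (wavePacket N₁ - wavePacket N₂) k u‖ ^ 2 := by simp [fourier_eq]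
    _ = ∫ ξ, ‖(wavePacket N₁ - wavePacket N₂) ξ u‖ ^ 2 := integral_norm_sq_fourier_apply_eq
        ((continuous_wavePacket N₁).sub (continuous_wavePacket N₂))
        ((integrable_wavePacket N₁).sub (integrable_wavePacket N₂))
        (fourier_eq ▸ (integrable_gaussianOp N₁).sub (integrable_gaussianOp N₂)) u
    _ ≤ ∫ ξ, (2 * π * ‖N₁ - N₂‖ * ‖u‖) ^ 2 * (gaussian ξ ^ 2 * ‖ξ‖ ^ 2) :=
        integral_mono_of_nonneg (.of_forall fun _ ↦ sq_nonneg _)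
          (integrable_gaussian_sq_mul_sq_norm.const_mul _) (.of_forall norm_sq_le)
    _ = (2 * π * ‖N₁ - N₂‖ * ‖u‖) ^ 2 * ∫ ξ, gaussian ξ ^ 2 * ‖ξ‖ ^ 2 :=
        integral_const_mul _ _
    _ ≤ (2 * π * ‖N₁ - N₂‖ * ‖u‖) ^ 2 :=
        mul_le_of_le_one_right (sq_nonneg _) integral_gaussian_sq_mul_sq_norm_le

lemma inner_cfc_smoothing_gaussianMeasure (a : ℂ →ᵇ ℂ) (N : H →L[ℂ] H) [IsStarNormal N]
    (u v : H) :
    inner ℂ v (cfc (smoothing gaussianMeasure 1 a) N u) =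
      ∫ k, a k * inner ℂ (gaussianOp N k v) (gaussianOp N k u) := by
  have integrable_sq := integrable_smul_gaussianOp_sq a N
  have symm (k : ℂ) (x : H) :
      inner ℂ v (gaussianOp N k x) = inner ℂ (gaussianOp N k v) x := by
    rw [← ContinuousLinearMap.adjoint_inner_left, (isSelfAdjoint_gaussianOp N k).adjoint_eq]
  rw [cfc_smoothing_gaussianMeasure, ContinuousLinearMap.integral_apply integrable_sq,
    ← integral_inner (integrable_sq.apply_continuousLinearMap u)]
  simp [pow_two, inner_smul_right, symm]

theorem norm_cfc_smoothing_gaussianMeasure_one_sub_le (a : ℂ →ᵇ ℂ) (N₁ N₂ : H →L[ℂ] H)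
    [IsStarNormal N₁] [IsStarNormal N₂] :
    ‖cfc (smoothing gaussianMeasure 1 a) N₁ - cfc (smoothing gaussianMeasure 1 a) N₂‖ ≤
      4 * π * ‖N₁ - N₂‖ * ‖a‖ := by
  have integrable_form (N : H →L[ℂ] H) [IsStarNormal N] (u v : H) :
      Integrable fun k ↦ a k * inner ℂ (gaussianOp N k v) (gaussianOp N k u) :=
    integrable_mul_inner a.continuous.aestronglyMeasurable a.norm_coe_le_norm
      (memLp_gaussianOp_apply N u) (memLp_gaussianOp_apply N v)
  refine ContinuousLinearMap.opNorm_le_of_re_inner_le (𝕜 := ℂ) (by positivity) fun u v hu hv ↦ ?_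
  refine (re_le_norm _).trans ?_
  rw [norm_inner_symm, sub_apply, inner_sub_right,
    inner_cfc_smoothing_gaussianMeasure, inner_cfc_smoothing_gaussianMeasure,
    ← integral_sub (integrable_form N₁ u v) (integrable_form N₂ u v)]
  refine (norm_integral_mul_inner_sub_le (norm_nonneg a) (by positivity) (norm_nonneg u)
    (norm_nonneg v) a.norm_coe_le_norm (memLp_gaussianOp_apply N₁ u) (memLp_gaussianOp_apply N₂ u)
    (memLp_gaussianOp_apply N₁ v) (memLp_gaussianOp_apply N₂ v)
    (integral_norm_sq_gaussianOp_apply N₂ u).le (integral_norm_sq_gaussianOp_apply N₁ v).le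
    (integral_norm_sq_gaussianOp_sub_apply_le N₁ N₂ u)
    (integral_norm_sq_gaussianOp_sub_apply_le N₁ N₂ v)).trans_eq ?_
  rw [hu, hv]
  ring

theorem norm_cfc_smoothing_gaussianMeasure_sub_le {s : ℝ} (hs : 0 < s) (a : ℂ →ᵇ ℂ)
    (N₁ N₂ : H →L[ℂ] H) [IsStarNormal N₁] [IsStarNormal N₂] :
    ‖cfc (smoothing gaussianMeasure s a) N₁ - cfc (smoothing gaussianMeasure s a) N₂‖ ≤
      4 * π * (‖N₁ - N₂‖ / s) * ‖a‖ := by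
  rw [cfc_smoothing_eq_cfc_smoothing_one _ hs.ne', cfc_smoothing_eq_cfc_smoothing_one _ hs.ne']
  refine (norm_cfc_smoothing_gaussianMeasure_one_sub_le _ _ _).trans ?_
  rw [← smul_sub, norm_smul, norm_inv, Real.norm_of_nonneg hs.le, inv_mul_eq_div]
  gcongr
  exact (BoundedContinuousFunction.norm_le (norm_nonneg a)).2 fun z ↦ a.norm_coe_le_norm _

end OperatorLipschitz

section OperatorHolder

variable {H : Type*} [NormedAddCommGroup H] [InnerProductSpace ℂ H] [CompleteSpace H]

/-- The constant of the operator Hölder estimate of order `α`: the bound in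
`norm_map_le_of_commuting_approximation` for `L = 2` and `K = 4π`, times the bound `2` for the
absolute moments of `gaussianMeasure`. -/
noncomputable def operatorHolderConst (α : ℝ) : ℝ :=
  2 * (2 + 5 / 2 * (4 * π) / (1 - 2 ^ (α - 1)))

lemma operatorHolderConst_pos {α : ℝ} (hα : α < 1) : 0 < operatorHolderConst α := by
  have ratio_lt_one : (2 : ℝ) ^ (α - 1) < 1 :=
    Real.rpow_lt_one_of_one_lt_of_neg one_lt_two (by linarith)
  have := sub_pos.2 ratio_lt_one
  unfold operatorHolderConst
  positivity

theorem norm_cfcSub_le_of_holderWith {C r : ℝ≥0} (hr : r < 1) {g : ℂ →ᵇ ℂ}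
    (hg : HolderWith C r g) {N₁ N₂ : H →L[ℂ] H} [IsStarNormal N₁] [IsStarNormal N₂]
    (hN : N₁ ≠ N₂) :
    ‖cfcSub N₁ N₂ g‖ ≤ operatorHolderConst r * C * ‖N₁ - N₂‖ ^ (r : ℝ) := by
  have hr' : (r : ℝ) < 1 := mod_cast hr
  have approximation (s : ℝ) (hs : 0 < s) :
      ‖g - smoothing gaussianMeasure s g‖ ≤ C * 2 * s ^ (r : ℝ) := by
    refine (norm_sub_smoothing_le _ hg
      (integrable_norm_rpow_gaussianMeasure r.coe_nonneg (by linarith)) hs.le).trans ?_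
    gcongr
    exact integral_norm_rpow_gaussianMeasure_le r.coe_nonneg (by linarith)
  refine (norm_map_le_of_commuting_approximation hr' (norm_sub_pos_iff.2 hN)
    (norm_cfcSub_le N₁ N₂) (fun s hs a ↦ norm_cfc_smoothing_gaussianMeasure_sub_le hs a N₁ N₂)
    (smoothing_comm gaussianMeasure) approximation (by positivity) zero_le_two).trans_eq ?_
  rw [operatorHolderConst]
  ring

theorem norm_cfc_sub_le_of_holderWith {C r : ℝ≥0} (hr₀ : 0 < r) (hr : r < 1) {f : ℂ → ℂ}
    (hf : HolderWith C r f) (N₁ N₂ : H →L[ℂ] H) [IsStarNormal N₁] [IsStarNormal N₂] :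
    ‖cfc f N₁ - cfc f N₂‖ ≤ operatorHolderConst r * C * ‖N₁ - N₂‖ ^ (r : ℝ) := by
  obtain rfl | hN := eq_or_ne N₁ N₂
  · simp [NNReal.coe_ne_zero.2 hr₀.ne']
  obtain ⟨g, hg, hfg⟩ := exists_boundedContinuous_holderWith_eqOn hr₀ hf
    ((spectrum.isBounded (𝕜 := ℂ) N₁).union (spectrum.isBounded (𝕜 := ℂ) N₂))
  rw [cfc_congr (hfg.mono Set.subset_union_left), cfc_congr (hfg.mono Set.subset_union_right)]
  exact norm_cfcSub_le_of_holderWith hr hg hN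

end OperatorHolder

/-- Aleksandrov–Peller–Potapov–Sukochev: every Hölder function of order `α ∈ (0,1)` on
the plane is operator Hölder of order `α` for normal operators: there is `c = c(α) > 0`
such that if `‖f(z) − f(w)‖ ≤ C·|z − w|^α` for all `z, w ∈ ℂ`, then for all bounded
normal operators `N₁, N₂`, `‖f(N₁) − f(N₂)‖ ≤ c·C·‖N₁ − N₂‖^α`. -/
theorem normal_operator_holder
    (α : ℝ) (hα0 : 0 < α) (hα1 : α < 1) :
    ∃ c : ℝ, 0 < c ∧
      ∀ (H : Type*) [NormedAddCommGroup H] [InnerProductSpace ℂ H] [CompleteSpace H],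
      ∀ (f : ℂ → ℂ) (C : ℝ), (∀ z w : ℂ, ‖f z - f w‖ ≤ C * ‖z - w‖ ^ α) →
      ∀ (N₁ N₂ : H →L[ℂ] H), IsStarNormal N₁ → IsStarNormal N₂ →
        ‖cfc f N₁ - cfc f N₂‖ ≤ c * C * ‖N₁ - N₂‖ ^ α := by
  refine ⟨operatorHolderConst α, operatorHolderConst_pos hα1,
    fun H _ _ _ f C hf N₁ N₂ _ _ ↦ ?_⟩
  have hC : 0 ≤ C := by simpa using (norm_nonneg _).trans (hf 1 0)
  lift α to ℝ≥0 using hα0.le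
  lift C to ℝ≥0 using hC
  exact norm_cfc_sub_le_of_holderWith (mod_cast hα0) (mod_cast hα1)
    (holderWith_of_norm_sub_le hf) N₁ N₂
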